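/- For any smooth function f : ℝ^k × ℝ^m → ℝ and any natural number l, there exist smooth functions h_{i₁⋯i_{l+1}} : ℝ^k × ℝ^m → ℝ (for indices i₁,…,i_{l+1} ∈ {1,…,m}) such that f(x,y) equals its Taylor expansion in y around y = 0 up to order l, plus the remainder ∑_{i₁,…,i_{l+1}} y^{i₁}⋯y^{i_{l+1}} · h_{i₁⋯i_{l+1}}(x,y). -/

import Mathlib

/-- Partial derivative of `g` in the `i`-th `y`-direction. -/
noncomputable def partialY {k m : ℕ} (i : Fin m)
    (g : (Fin k → ℝ) × (Fin m → ℝ) → ℝ) : (Fin k → ℝ) × (Fin m → ℝ) → ℝ :=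
  fun p => fderiv ℝ g p (0, Pi.single i 1)

/-- Iterated partial derivative of `g` in the `y`-directions along a list of indices. -/
noncomputable def partialYList {k m : ℕ} :
    List (Fin m) → ((Fin k → ℝ) × (Fin m → ℝ) → ℝ) → (Fin k → ℝ) × (Fin m → ℝ) → ℝ
  | [], g => g
  | i :: is, g => partialY i (partialYList is g)

open MeasureTheory intervalIntegral in
lemma hasFDerivAt_param {E : Type} [NormedAddCommGroup E] [NormedSpace ℝ E]
    [FiniteDimensional ℝ E] (F : E × ℝ → ℝ) (hF : ContDiff ℝ (⊤ : ℕ∞) F) (p : E) :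
    HasFDerivAt (fun q => ∫ t in (0:ℝ)..1, F (q, t))
      (∫ t in (0:ℝ)..1, (fderiv ℝ F (p, t)).comp (ContinuousLinearMap.inl ℝ E ℝ)) p := by
  have : ProperSpace E := FiniteDimensional.proper ℝ E
  have hc : Continuous F := hF.continuous
  have hd : Continuous (fun z : E × ℝ => (fderiv ℝ F z).comp (ContinuousLinearMap.inl ℝ E ℝ)) :=
    (hF.continuous_fderiv (by simp)).clm_comp continuous_const
  have hK : IsCompact (Metric.closedBall p 1 ×ˢ Set.Icc (0:ℝ) 1) :=
    (isCompact_closedBall p 1).prod isCompact_Icc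
  obtain ⟨C, hC⟩ := hK.exists_bound_of_continuousOn hd.continuousOn
  refine hasFDerivAt_integral_of_dominated_of_fderiv_le (bound := fun _ => C)
    (F := fun q t => F (q, t))
    (F' := fun q t => (fderiv ℝ F (q, t)).comp (ContinuousLinearMap.inl ℝ E ℝ))
    (Metric.closedBall_mem_nhds p one_pos) ?_ ?_ ?_ ?_ ?_ ?_
  · exact Filter.Eventually.of_forall fun q =>
      (hc.comp (Continuous.prodMk_right q)).aestronglyMeasurable
  · exact (hc.comp (Continuous.prodMk_right p)).intervalIntegrable _ _
  · exact (hd.comp (Continuous.prodMk_right p)).aestronglyMeasurable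
  · refine Filter.Eventually.of_forall fun t ht q hq => hC (q, t) ⟨hq, ?_⟩
    rw [Set.uIoc_of_le zero_le_one] at ht
    exact ⟨ht.1.le, ht.2⟩
  · exact intervalIntegrable_const
  · refine Filter.Eventually.of_forall fun t _ q _ => ?_
    have h1 : HasFDerivAt F (fderiv ℝ F (q, t)) (q, t) :=
      (hF.differentiable (by simp) _).hasFDerivAt
    exact h1.comp q (hasFDerivAt_prodMk_left q t)

lemma contDiff_param_nat {E : Type} [NormedAddCommGroup E] [NormedSpace ℝ E]
    [FiniteDimensional ℝ E] (n : ℕ) : ∀ (F : E × ℝ → ℝ) (_ : ContDiff ℝ (⊤ : ℕ∞) F),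
    ContDiff ℝ n (fun q => ∫ t in (0:ℝ)..1, F (q, t)) := by
  induction n with
  | zero =>
    intro F hF
    have : Differentiable ℝ (fun q => ∫ t in (0:ℝ)..1, F (q, t)) :=
      fun p => (hasFDerivAt_param F hF p).differentiableAt
    exact contDiff_zero.2 this.continuous
  | succ n ih =>
    intro F hF
    push_cast
    rw [contDiff_succ_iff_fderiv_apply]
    refine ⟨fun p => (hasFDerivAt_param F hF p).differentiableAt, by simp, fun v => ?_⟩
    have hs : ContDiff ℝ (⊤ : ℕ∞) (fun z : E × ℝ => fderiv ℝ F z (v, 0)) :=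
      (hF.fderiv_right (by simp)).clm_apply contDiff_const
    convert ih _ hs using 2 with p
    rw [(hasFDerivAt_param F hF p).fderiv, ContinuousLinearMap.intervalIntegral_apply]
    · simp
    · have hd : Continuous (fun z : E × ℝ =>
          (fderiv ℝ F z).comp (ContinuousLinearMap.inl ℝ E ℝ)) :=
        (hF.continuous_fderiv (by simp)).clm_comp continuous_const
      exact (hd.comp (Continuous.prodMk_right p)).intervalIntegrable _ _

lemma contDiff_param {E : Type} [NormedAddCommGroup E] [NormedSpace ℝ E]
    [FiniteDimensional ℝ E] (F : E × ℝ → ℝ) (hF : ContDiff ℝ (⊤ : ℕ∞) F) :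
    ContDiff ℝ (⊤ : ℕ∞) (fun q => ∫ t in (0:ℝ)..1, F (q, t)) :=
  contDiff_infty.2 fun n => contDiff_param_nat n F hF

lemma contDiff_partialY {k m : ℕ} (i : Fin m) (g : (Fin k → ℝ) × (Fin m → ℝ) → ℝ)
    (hg : ContDiff ℝ (⊤ : ℕ∞) g) : ContDiff ℝ (⊤ : ℕ∞) (partialY i g) :=
  (hg.fderiv_right (by simp)).clm_apply contDiff_const

lemma contDiff_partialYList {k m : ℕ} (L : List (Fin m)) (g : (Fin k → ℝ) × (Fin m → ℝ) → ℝ)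
    (hg : ContDiff ℝ (⊤ : ℕ∞) g) : ContDiff ℝ (⊤ : ℕ∞) (partialYList L g) := by
  induction L with
  | nil => exact hg
  | cons i L ih => exact contDiff_partialY i _ ih

/-- The integral remainder coefficient. -/
noncomputable def remI {k m : ℕ} (l : ℕ) (g : (Fin k → ℝ) × (Fin m → ℝ) → ℝ)
    (p : (Fin k → ℝ) × (Fin m → ℝ)) : ℝ :=
  ∫ t in (0:ℝ)..1, ((1 - t) ^ l * ((l.factorial : ℝ)⁻¹)) * g (p.1, t • p.2)

lemma contDiff_remI {k m : ℕ} (l : ℕ) (g : (Fin k → ℝ) × (Fin m → ℝ) → ℝ)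
    (hg : ContDiff ℝ (⊤ : ℕ∞) g) : ContDiff ℝ (⊤ : ℕ∞) (remI l g) := by
  refine contDiff_param (E := (Fin k → ℝ) × (Fin m → ℝ))
    (fun z => ((1 - z.2) ^ l * ((l.factorial : ℝ)⁻¹)) * g (z.1.1, z.2 • z.1.2)) ?_
  refine ContDiff.mul (by fun_prop) (hg.comp ?_)
  fun_prop

lemma hasDerivAt_line {k m : ℕ} (g : (Fin k → ℝ) × (Fin m → ℝ) → ℝ)
    (hg : ContDiff ℝ (⊤ : ℕ∞) g) (x : Fin k → ℝ) (y : Fin m → ℝ) (t : ℝ) :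
    HasDerivAt (fun t : ℝ => g (x, t • y)) (∑ i, y i * partialY i g (x, t • y)) t := by
  have h1 : HasFDerivAt g (fderiv ℝ g (x, t • y)) (x, t • y) :=
    (hg.differentiable (by simp) _).hasFDerivAt
  have h2 : HasDerivAt (fun t : ℝ => (x, t • y)) ((0 : Fin k → ℝ), y) t := by
    have := (hasDerivAt_id t).smul_const y
    simpa using (hasDerivAt_const t x).prodMk this
  have h3 := h1.comp_hasDerivAt t h2
  refine h3.congr_deriv (Eq.symm ?_)
  have : ((0 : Fin k → ℝ), y) = ∑ i, y i • ((0 : Fin k → ℝ), (Pi.single i 1 : Fin m → ℝ)) := by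
    ext j
    · simp [Prod.fst_sum]
    · simp [Prod.snd_sum, Finset.sum_apply, Pi.single_apply]
  rw [this, map_sum]
  simp only [map_smul, smul_eq_mul, partialY]

lemma continuous_line {k m : ℕ} (g : (Fin k → ℝ) × (Fin m → ℝ) → ℝ)
    (hg : ContDiff ℝ (⊤ : ℕ∞) g) (x : Fin k → ℝ) (y : Fin m → ℝ) :
    Continuous (fun t : ℝ => g (x, t • y)) :=
  hg.continuous.comp (by fun_prop)

lemma integral_line {k m : ℕ} (g : (Fin k → ℝ) × (Fin m → ℝ) → ℝ)
    (hg : ContDiff ℝ (⊤ : ℕ∞) g) (x : Fin k → ℝ) (y : Fin m → ℝ) (w : ℝ → ℝ)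
    (hw : Continuous w) :
    ∫ t in (0:ℝ)..1, w t * ∑ i, y i * partialY i g (x, t • y) =
      ∑ i, y i * ∫ t in (0:ℝ)..1, w t * partialY i g (x, t • y) := by
  simp_rw [Finset.mul_sum]
  rw [intervalIntegral.integral_finsetSum]
  · refine Finset.sum_congr rfl fun i _ => ?_
    rw [← intervalIntegral.integral_const_mul]
    congr 1; ext t; ring
  · intro i _
    exact (hw.mul (continuous_const.mul
      (continuous_line _ (contDiff_partialY i g hg) x y))).intervalIntegrable _ _

lemma continuous_dline {k m : ℕ} (g : (Fin k → ℝ) × (Fin m → ℝ) → ℝ)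
    (hg : ContDiff ℝ (⊤ : ℕ∞) g) (x : Fin k → ℝ) (y : Fin m → ℝ) :
    Continuous (fun t : ℝ => ∑ i, y i * partialY i g (x, t • y)) :=
  continuous_finsetSum _ fun i _ => continuous_const.mul
      (continuous_line _ (contDiff_partialY i g hg) x y)

lemma step_zero {k m : ℕ} (g : (Fin k → ℝ) × (Fin m → ℝ) → ℝ)
    (hg : ContDiff ℝ (⊤ : ℕ∞) g) (x : Fin k → ℝ) (y : Fin m → ℝ) :
    g (x, y) = g (x, 0) + ∑ i, y i * remI 0 (partialY i g) (x, y) := by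
  have h := intervalIntegral.integral_eq_sub_of_hasDerivAt (a := 0) (b := 1)
    (fun t _ => hasDerivAt_line g hg x y t) ((continuous_dline g hg x y).intervalIntegrable _ _)
  have h2 := integral_line g hg x y (fun _ => 1) continuous_const
  simp only [one_mul, one_smul, zero_smul] at h h2
  simp only [remI, pow_zero, Nat.factorial_zero, Nat.cast_one, inv_one, mul_one, one_mul]
  linarith

lemma step_succ {k m : ℕ} (l : ℕ) (g : (Fin k → ℝ) × (Fin m → ℝ) → ℝ)
    (hg : ContDiff ℝ (⊤ : ℕ∞) g) (x : Fin k → ℝ) (y : Fin m → ℝ) :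
    remI l g (x, y) = ((l + 1).factorial : ℝ)⁻¹ * g (x, 0)
      + ∑ i, y i * remI (l + 1) (partialY i g) (x, y) := by
  have hu : ∀ t : ℝ, HasDerivAt (fun t : ℝ => -((1 - t) ^ (l + 1) * (((l + 1).factorial : ℝ)⁻¹)))
      ((1 - t) ^ l * ((l.factorial : ℝ)⁻¹)) t := by
    intro t
    have h1 := ((((hasDerivAt_id t).const_sub 1).pow (l + 1)).mul_const
      (((l + 1).factorial : ℝ)⁻¹)).neg
    refine h1.congr_deriv (Eq.symm ?_)
    have : (l.factorial : ℝ) ≠ 0 := by positivity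
    rw [Nat.factorial_succ]
    push_cast
    simp
    field_simp
  have hcu : Continuous (fun t : ℝ => (1 - t) ^ l * ((l.factorial : ℝ)⁻¹)) := by fun_prop
  have hcu2 : Continuous (fun t : ℝ => (1 - t) ^ (l + 1) * (((l + 1).factorial : ℝ)⁻¹)) := by
    fun_prop
  have h := intervalIntegral.integral_deriv_mul_eq_sub (a := 0) (b := 1)
    (fun t _ => hu t) (fun t _ => hasDerivAt_line g hg x y t)
    (hcu.intervalIntegrable _ _) ((continuous_dline g hg x y).intervalIntegrable _ _)
  have hi1 : IntervalIntegrable (fun t : ℝ => (1 - t) ^ l * ((l.factorial : ℝ)⁻¹) * g (x, t • y))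
      MeasureTheory.volume 0 1 :=
    (hcu.mul (continuous_line g hg x y)).intervalIntegrable _ _
  have hi2 : IntervalIntegrable (fun t : ℝ =>
      -((1 - t) ^ (l + 1) * (((l + 1).factorial : ℝ)⁻¹)) * ∑ i, y i * partialY i g (x, t • y))
      MeasureTheory.volume 0 1 :=
    (hcu2.neg.mul (continuous_dline g hg x y)).intervalIntegrable _ _
  rw [intervalIntegral.integral_add hi1 hi2] at h
  have h2 := integral_line g hg x y _ hcu2
  simp only [neg_mul, intervalIntegral.integral_neg] at h
  rw [h2] at h
  simp only [sub_self, sub_zero, zero_smul, one_pow, one_mul, ne_eq, Nat.succ_ne_zero,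
    not_false_eq_true, zero_pow, zero_mul, neg_zero, add_eq_zero, one_ne_zero, and_false] at h
  simp only [remI]
  linarith

lemma sum_cons {k m : ℕ} (j : ℕ) (f : (Fin k → ℝ) × (Fin m → ℝ) → ℝ)
    (y : Fin m → ℝ) (R : ((Fin k → ℝ) × (Fin m → ℝ) → ℝ) → ℝ) :
    ∑ ι : Fin (j + 1) → Fin m, (∏ a, y (ι a)) * R (partialYList (List.ofFn ι) f) =
    ∑ ι : Fin j → Fin m, (∏ a, y (ι a)) *
      ∑ i, y i * R (partialY i (partialYList (List.ofFn ι) f)) := by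
  rw [← (Fin.consEquiv (fun _ : Fin (j + 1) => Fin m)).sum_comp, Fintype.sum_prod_type_right]
  refine Finset.sum_congr rfl fun ι _ => ?_
  rw [Finset.mul_sum]
  refine Finset.sum_congr rfl fun i _ => ?_
  simp [Fin.consEquiv, Fin.prod_univ_succ, List.ofFn_succ, partialYList]
  ring

lemma taylor_rem {k m : ℕ} (l : ℕ) (f : (Fin k → ℝ) × (Fin m → ℝ) → ℝ)
    (hf : ContDiff ℝ (⊤ : ℕ∞) f) (x : Fin k → ℝ) (y : Fin m → ℝ) :
    f (x, y) =
          (∑ j ∈ Finset.range (l + 1), ((j.factorial : ℝ)⁻¹ *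
            ∑ ι : Fin j → Fin m,
              (∏ a, y (ι a)) * partialYList (List.ofFn ι) f (x, 0)))
          + ∑ ι : Fin (l + 1) → Fin m,
              (∏ a, y (ι a)) * remI l (partialYList (List.ofFn ι) f) (x, y) := by
  induction l with
  | zero =>
    rw [sum_cons 0 f y (fun g => remI 0 g (x, y))]
    simpa [partialYList] using step_zero f hf x y
  | succ l ih =>
    rw [sum_cons (l + 1) f y (fun g => remI (l + 1) g (x, y)), Finset.sum_range_succ, add_assoc]
    refine ih.trans ?_
    congr 1
    rw [Finset.mul_sum, ← Finset.sum_add_distrib]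
    refine Finset.sum_congr rfl fun ι _ => ?_
    rw [step_succ l _ (contDiff_partialYList _ f hf) x y]
    ring

/-- Parametrized Hadamard's lemma with higher-order remainder. -/
theorem stmt_0 (k m l : ℕ) (f : (Fin k → ℝ) × (Fin m → ℝ) → ℝ)
    (hf : ContDiff ℝ (⊤ : ℕ∞) f) :
    ∃ h : (Fin (l + 1) → Fin m) → (Fin k → ℝ) × (Fin m → ℝ) → ℝ,
      (∀ ι, ContDiff ℝ (⊤ : ℕ∞) (h ι)) ∧
      ∀ x : Fin k → ℝ, ∀ y : Fin m → ℝ,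
        f (x, y) =
          (∑ j ∈ Finset.range (l + 1), ((j.factorial : ℝ)⁻¹ *
            ∑ ι : Fin j → Fin m,
              (∏ a, y (ι a)) * partialYList (List.ofFn ι) f (x, 0)))
          + ∑ ι : Fin (l + 1) → Fin m,
              (∏ a, y (ι a)) * h ι (x, y) := by
  exact ⟨fun ι => remI l (partialYList (List.ofFn ι) f),
    fun ι => contDiff_remI l _ (contDiff_partialYList _ f hf),
    fun x y => taylor_rem l f hf x y⟩
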